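/- arXiv:1407.0139 — 2 statements merged into one kernel-verified Lean document; each statement's English description precedes it below -/
import Mathlib

section
/- Let G be a finite connected bridgeless simple graph and let S be a pairwise-disconnecting set of G. Then there exists a unique maximal pairwise-disconnecting set S_M of G with S ⊆ S_M. -/
open LaurentPolynomial Finset

/-- `S` is a pairwise-disconnecting set of `G`: a set of at least two edges of `G` such that
deleting any two distinct edges of `S` disconnects the graph. -/
def IsPDSet {V : Type*} (G : SimpleGraph V) (S : Finset (Sym2 V)) : Prop :=
  ↑S ⊆ G.edgeSet ∧ 2 ≤ S.card ∧
    ∀ e ∈ S, ∀ f ∈ S, e ≠ f → ¬ (G.deleteEdges {e, f}).Connected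

/-- A pairwise-disconnecting set is maximal if no pairwise-disconnecting set contains it
as a proper subset. -/
def IsMaxPDSet {V : Type*} (G : SimpleGraph V) (S : Finset (Sym2 V)) : Prop :=
  IsPDSet G S ∧ ∀ S' : Finset (Sym2 V), IsPDSet G S' → S ⊆ S' → S' = S

/-!
If `f` is not a bridge, deleting the distinct edges `e` and `f` disconnects a connected graph
exactly when every cycle through `e` also passes through `f`. This relation is visibly transitive,
and the symmetry of deleting `e` and `f` makes it an equivalence on non-bridges. Hence the
largest pairwise-disconnecting set containing a given non-bridge `e` consists of the bridges and the
edges common to all cycles through `e`. The latter are finitely many even in an infinite graph, as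
they all lie on a single cycle.
-/

section

variable {V : Type*} {G : SimpleGraph V} {e f g : Sym2 V}

/-- The edge `e` forces `f` on cycles: every cycle of `G` through `e` also passes through `f`.
The condition is vacuous when `e` is on no cycle, that is, when `e` is a bridge or not an edge. -/
def CycleForces (G : SimpleGraph V) (e f : Sym2 V) : Prop :=
  ∀ ⦃u : V⦄ (p : G.Walk u u), p.IsCycle → e ∈ p.edges → f ∈ p.edges

theorem mem_edgeSet_of_isBridge (hG : G.Preconnected) (he : G.IsBridge e) : e ∈ G.edgeSet := by
  induction e with
  | h u v => exact he.reachable_iff_adj.mp (hG u v)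

theorem connected_deleteEdges_singleton_iff (hG : G.Connected) :
    (G.deleteEdges {e}).Connected ↔ ¬ G.IsBridge e := by
  induction e with
  | h u v => exact ⟨fun h hb ↦ hb (h u v), hG.connected_delete_edge_of_not_isBridge⟩

theorem isBridge_deleteEdges_singleton_iff_cycleForces (he : e ∈ G.edgeSet) (hef : e ≠ f) :
    (G.deleteEdges {f}).IsBridge e ↔ CycleForces G e f := by
  have he' : e ∈ (G.deleteEdges {f}).edgeSet := by
    rw [SimpleGraph.edgeSet_deleteEdges]
    exact ⟨he, hef⟩
  rw [SimpleGraph.isBridge_iff_forall_cycle_notMem he']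
  constructor
  · intro h u p hp hep
    by_contra hfp
    have hp' : (p.toDeleteEdge f hfp).IsCycle := hp.toDeleteEdges _ _ _
    exact h _ hp' (by simpa using hep)
  · intro h u p hp hep
    have hle := G.deleteEdges_le {f}
    have hfp : f ∈ p.edges := by simpa using h (p.mapLe hle) (hp.mapLe hle) (by simpa using hep)
    simpa using p.edges_subset_edgeSet hfp

theorem not_connected_deleteEdges_pair_iff (hG : G.Connected) (he : e ∈ G.edgeSet) (hef : e ≠ f) :
    ¬ (G.deleteEdges {e, f}).Connected ↔ G.IsBridge f ∨ CycleForces G e f := by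
  rw [Set.pair_comm, Set.insert_eq, ← SimpleGraph.deleteEdges_deleteEdges]
  by_cases hf : G.IsBridge f
  · have hGf : ¬ (G.deleteEdges {f}).Connected := by
      rwa [connected_deleteEdges_singleton_iff hG, not_not]
    exact iff_of_true (fun h ↦ hGf (h.mono (SimpleGraph.deleteEdges_le _))) (.inl hf)
  · rw [connected_deleteEdges_singleton_iff ((connected_deleteEdges_singleton_iff hG).mpr hf),
      not_not, isBridge_deleteEdges_singleton_iff_cycleForces he hef, or_iff_right hf]

theorem exists_isCycle_mem_edges (he : e ∈ G.edgeSet) (hb : ¬ G.IsBridge e) :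
    ∃ (u : V) (p : G.Walk u u), p.IsCycle ∧ e ∈ p.edges := by
  simpa [SimpleGraph.isBridge_iff_forall_cycle_notMem he] using hb

namespace CycleForces

theorem refl (G : SimpleGraph V) (e : Sym2 V) : CycleForces G e e :=
  fun _ _ _ he ↦ he

theorem trans (hef : CycleForces G e f) (hfg : CycleForces G f g) : CycleForces G e g :=
  fun _ p hp he ↦ hfg p hp (hef p hp he)

theorem finite_setOf (he : e ∈ G.edgeSet) (hb : ¬ G.IsBridge e) :
    {f | CycleForces G e f}.Finite := by
  obtain ⟨u, p, hp, hep⟩ := exists_isCycle_mem_edges he hb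
  exact p.edges.finite_toSet.subset fun f hf ↦ hf p hp hep

theorem mem_edgeSet (hef : CycleForces G e f) (he : e ∈ G.edgeSet) (hb : ¬ G.IsBridge e) :
    f ∈ G.edgeSet := by
  obtain ⟨u, p, hp, hep⟩ := exists_isCycle_mem_edges he hb
  exact p.edges_subset_edgeSet (hef p hp hep)

theorem symm (hef : CycleForces G e f) (hG : G.Connected) (he : e ∈ G.edgeSet)
    (hb : ¬ G.IsBridge e) : CycleForces G f e := by
  obtain rfl | hne := eq_or_ne e f
  · exact hef
  have hdis : ¬ (G.deleteEdges {f, e}).Connected := by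
    rw [Set.pair_comm]
    exact (not_connected_deleteEdges_pair_iff hG he hne).mpr (.inr hef)
  have hf : f ∈ G.edgeSet := hef.mem_edgeSet he hb
  exact ((not_connected_deleteEdges_pair_iff hG hf hne.symm).mp hdis).resolve_left hb

end CycleForces

theorem isPDSet_iff_forall_isBridge_or_cycleForces {S : Finset (Sym2 V)} (hG : G.Connected)
    (he : e ∈ G.edgeSet) (hb : ¬ G.IsBridge e) (heS : e ∈ S) :
    IsPDSet G S ↔ 2 ≤ #S ∧ ∀ f ∈ S, G.IsBridge f ∨ CycleForces G e f := by
  constructor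
  · rintro ⟨-, hcard, hdis⟩
    refine ⟨hcard, fun f hf ↦ ?_⟩
    obtain rfl | hne := eq_or_ne e f
    · exact .inr (.refl G e)
    · exact (not_connected_deleteEdges_pair_iff hG he hne).mp (hdis e heS f hf hne)
  · rintro ⟨hcard, hS⟩
    have hSE : ∀ f ∈ S, f ∈ G.edgeSet := fun f hf ↦
      (hS f hf).elim (mem_edgeSet_of_isBridge hG.preconnected) (·.mem_edgeSet he hb)
    refine ⟨hSE, hcard, fun f hf g hg hfg ↦ ?_⟩
    obtain hbf | hef := hS f hf
    · rw [Set.pair_comm]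
      exact (not_connected_deleteEdges_pair_iff hG (hSE g hg) hfg.symm).mpr (.inl hbf)
    · exact (not_connected_deleteEdges_pair_iff hG (hSE f hf) hfg).mpr
        ((hS g hg).imp_right (hef.symm hG he hb).trans)

theorem exists_unique_maximal_pdset_general (hG : G.Connected) (hfin : {e | G.IsBridge e}.Finite)
    (S : Finset (Sym2 V)) (hS : IsPDSet G S) (hb : ∃ e ∈ S, ¬ G.IsBridge e) :
    ∃! S_M : Finset (Sym2 V), IsMaxPDSet G S_M ∧ S ⊆ S_M := by
  obtain ⟨e, heS, hb⟩ := hb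
  have he : e ∈ G.edgeSet := hS.1 heS
  obtain ⟨M, hM⟩ := (hfin.union (CycleForces.finite_setOf he hb)).exists_finset
  have subset_M {T : Finset (Sym2 V)} (hT : IsPDSet G T) (hST : S ⊆ T) : T ⊆ M := fun f hf ↦
    (hM f).mpr (((isPDSet_iff_forall_isBridge_or_cycleForces hG he hb (hST heS)).mp hT).2 f hf)
  have hSM : S ⊆ M := subset_M hS subset_rfl
  have hMPD : IsPDSet G M :=
    (isPDSet_iff_forall_isBridge_or_cycleForces hG he hb (hSM heS)).mpr
      ⟨hS.2.1.trans (card_le_card hSM), fun f ↦ (hM f).mp⟩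
  refine ⟨M, ⟨⟨hMPD, fun T hT hMT ↦ ?_⟩, hSM⟩, fun T ⟨hT, hST⟩ ↦ ?_⟩
  · exact (subset_M hT (hSM.trans hMT)).antisymm hMT
  · exact (hT.2 M hMPD (subset_M hT.1 hST)).symm

end

/-- Every pairwise-disconnecting set of a finite connected bridgeless simple graph is
contained in a unique maximal pairwise-disconnecting set. -/
theorem exists_unique_maximal_pdset {V : Type*} [Fintype V] [DecidableEq V]
    (G : SimpleGraph V) (hconn : G.Connected) (hbl : ∀ e : Sym2 V, ¬ G.IsBridge e)
    (S : Finset (Sym2 V)) (hS : IsPDSet G S) :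
    ∃! S_M : Finset (Sym2 V), IsMaxPDSet G S_M ∧ S ⊆ S_M := by
  obtain ⟨e, he⟩ : S.Nonempty := card_pos.mp (two_pos.trans_le hS.2.1)
  exact exists_unique_maximal_pdset_general hconn (Set.toFinite _) S hS ⟨e, he, hbl e⟩
end

section
/- Let G be a finite connected bridgeless simple graph, let S be a pairwise-disconnecting set of G, and for an edge e of G let S_M(e) denote the union of {e} and the set of all bridges of G − e. Then for any two edges e, f ∈ S, S_M(e) = S_M(f). -/
open LaurentPolynomial Finset

open scoped Classical in
/-- `SMfin G e` is the union of `{e}` and the set of all bridges of `G - e`. -/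
noncomputable def SMfin {V : Type*} [Fintype V] [DecidableEq V] (G : SimpleGraph V)
    (e : Sym2 V) : Finset (Sym2 V) :=
  insert e (Finset.univ.filter fun f => (G.deleteEdges {e}).IsBridge f)

/-!
Every edge of `S` can be deleted without disconnecting `G`. For such an edge `e`, the set `S_M(e)`
consists of the edges `g` such that every cycle through `g` passes through `e`, so `e ∈ S_M(f)`
implies `S_M(e) ⊆ S_M(f)`. Since any two edges of `S` disconnect `G`, each of them lies in the
`S_M` of the other.
-/

section

variable {V : Type*} {G : SimpleGraph V} {e f g : Sym2 V}

theorem connected_deleteEdges_singleton_of_not_isBridge (hG : G.Connected)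
    (he : ¬ G.IsBridge e) : (G.deleteEdges {e}).Connected := by
  cases e with | h x y => exact hG.connected_delete_edge_of_not_isBridge he

theorem isBridge_deleteEdges_iff_forall_cycle {s : Set (Sym2 V)} (hg : g ∈ G.edgeSet)
    (hgs : g ∉ s) : (G.deleteEdges s).IsBridge g ↔
      ∀ ⦃u : V⦄ (p : G.Walk u u), p.IsCycle → g ∈ p.edges → ∃ e ∈ s, e ∈ p.edges := by
  have hg' : g ∈ (G.deleteEdges s).edgeSet := by
    rw [SimpleGraph.edgeSet_deleteEdges]
    exact ⟨hg, hgs⟩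
  rw [SimpleGraph.isBridge_iff_forall_cycle_notMem hg']
  constructor
  · intro h u p hp hgp
    by_contra! hps
    have avoids : ∀ e ∈ p.edges, e ∉ s := fun e hep hes ↦ hps e hes hep
    refine h (p.toDeleteEdges s avoids) (hp.toDeleteEdges G s avoids) ?_
    rwa [SimpleGraph.Walk.edges_transfer]
  · intro h u p hp hgp
    have hle : G.deleteEdges s ≤ G := SimpleGraph.deleteEdges_le s
    obtain ⟨e, hes, hep⟩ := h (p.mapLe hle) (hp.mapLe hle) (by rwa [p.edges_mapLe_eq_edges])
    rw [p.edges_mapLe_eq_edges] at hep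
    have he := p.edges_subset_edgeSet hep
    rw [SimpleGraph.edgeSet_deleteEdges] at he
    exact he.2 hes

/-- The set `S_M(e)` in a graph on an arbitrary vertex type: `e` together with the bridges of
`G - e`. It extends `SMfin` to infinite graphs. As there, `IsBridge` also holds of a pair of
vertices in different components, so this is the intended set only when `G - e` is connected. -/
def SM (G : SimpleGraph V) (e : Sym2 V) : Set (Sym2 V) :=
  insert e {g | (G.deleteEdges {e}).IsBridge g}

theorem coe_SMfin [Fintype V] [DecidableEq V] : (SMfin G e : Set (Sym2 V)) = SM G e := by
  simp [SMfin, SM]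

theorem mem_SM_iff_forall_cycle (hG : G.Connected) (he : e ∈ G.edgeSet) (hb : ¬ G.IsBridge e) :
    g ∈ SM G e ↔ g ∈ G.edgeSet ∧
      ∀ ⦃u : V⦄ (p : G.Walk u u), p.IsCycle → g ∈ p.edges → e ∈ p.edges := by
  obtain rfl | hge := eq_or_ne g e
  · exact iff_of_true (Set.mem_insert g _) ⟨he, fun _ _ _ hp ↦ hp⟩
  have mem_iff_bridge : g ∈ SM G e ↔ (G.deleteEdges {e}).IsBridge g := or_iff_right hge
  have bridge_iff (hg : g ∈ G.edgeSet) := isBridge_deleteEdges_iff_forall_cycle (s := {e}) hg hge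
  simp only [Set.mem_singleton_iff, exists_eq_left] at bridge_iff
  have mem_of_bridge (h : (G.deleteEdges {e}).IsBridge g) : g ∈ G.edgeSet :=
    SimpleGraph.edgeSet_mono (SimpleGraph.deleteEdges_le {e}) <|
      mem_edgeSet_of_isBridge
        (connected_deleteEdges_singleton_of_not_isBridge hG hb).preconnected h
  rw [mem_iff_bridge, ← and_iff_right_of_imp mem_of_bridge]
  exact and_congr_right bridge_iff

theorem SM_subset_SM_of_mem (hG : G.Connected) (he : e ∈ G.edgeSet) (hbe : ¬ G.IsBridge e)
    (hf : f ∈ G.edgeSet) (hbf : ¬ G.IsBridge f) (hef : e ∈ SM G f) : SM G e ⊆ SM G f := by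
  intro g hg
  rw [mem_SM_iff_forall_cycle hG he hbe] at hg
  rw [mem_SM_iff_forall_cycle hG hf hbf] at hef ⊢
  exact ⟨hg.1, fun _ p hp hgp ↦ hef.2 p hp (hg.2 p hp hgp)⟩

theorem isBridge_deleteEdges_of_not_connected (hG : G.Connected) (he : ¬ G.IsBridge e)
    (hef : ¬ (G.deleteEdges {e, f}).Connected) : (G.deleteEdges {e}).IsBridge f := by
  contrapose! hef
  rw [Set.insert_eq, ← SimpleGraph.deleteEdges_deleteEdges]
  exact connected_deleteEdges_singleton_of_not_isBridge
    (connected_deleteEdges_singleton_of_not_isBridge hG he) hef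

theorem IsPDSet.mem_SM {S : Finset (Sym2 V)} (hS : IsPDSet G S) (hG : G.Connected)
    (he : e ∈ S) (hf : f ∈ S) (hb : ¬ G.IsBridge f) : e ∈ SM G f := by
  obtain rfl | hef := eq_or_ne e f
  · exact Set.mem_insert e _
  · exact Or.inr (isBridge_deleteEdges_of_not_connected hG hb (hS.2.2 f hf e he hef.symm))

theorem SMfin_eq_of_mem_pdset_general (hG : G.Connected) {S : Finset (Sym2 V)}
    (hS : IsPDSet G S) (he : e ∈ S) (hf : f ∈ S) (hbe : ¬ G.IsBridge e)
    (hbf : ¬ G.IsBridge f) : SM G e = SM G f := by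
  have heG : e ∈ G.edgeSet := hS.1 he
  have hfG : f ∈ G.edgeSet := hS.1 hf
  exact Set.Subset.antisymm
    (SM_subset_SM_of_mem hG heG hbe hfG hbf (hS.mem_SM hG he hf hbf))
    (SM_subset_SM_of_mem hG hfG hbf heG hbe (hS.mem_SM hG hf he hbe))

end

/-- For any two edges `e, f` of a pairwise-disconnecting set `S` of a finite connected
bridgeless simple graph `G`, `S_M(e) = S_M(f)`, where `S_M(e)` is the union of `{e}` and
the set of bridges of `G - e`. -/
theorem SMfin_eq_of_mem_pdset {V : Type*} [Fintype V] [DecidableEq V]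
    (G : SimpleGraph V) (hconn : G.Connected) (hbl : ∀ g : Sym2 V, ¬ G.IsBridge g)
    (S : Finset (Sym2 V)) (hS : IsPDSet G S) (e f : Sym2 V) (he : e ∈ S) (hf : f ∈ S) :
    SMfin G e = SMfin G f := by
  rw [← Finset.coe_inj, coe_SMfin, coe_SMfin]
  exact SMfin_eq_of_mem_pdset_general hconn hS he hf (hbl e) (hbl f)
end
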